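/- Let d, r be positive integers with r < d, and let E be a d × r real matrix with orthonormal columns (Eᵀ E = I_r). Fix σ > 0 and a measurable noise schedule σ_• : (0,1) → ℝ with 0 < σ_min ≤ σ_t ≤ σ_max < ∞ for all t ∈ (0,1). Let Θ be the set of pairs (U, V) of d × r real matrices with Uᵀ U = I_r and Vᵀ V positive definite. For (U, V) ∈ Θ and t ∈ (0,1) set Σ_{θ,t} := U Vᵀ V Uᵀ + σ_t² I_d and Σ_{σ,t} := E Eᵀ + (σ² + σ_t²) I_d, and define the distillation loss L(U, V) := ∫₀¹ tr( Σ_{θ,t} · (Σ_{σ,t}⁻¹ − Σ_{θ,t}⁻¹)² ) dt. Then (U*, V*) ∈ Θ is a global minimizer of L over Θ if and only if there exists an orthogonal r × r matrix Q with U* = E Q and (V*)ᵀ V* = (1 + σ²) I_r. -/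

import Mathlib

open Matrix MeasureTheory

/-!
Put `K = VᵀV` and `y = σ² + s`, where `s = σ_t²`. Because `U` and `E` have orthonormal columns, both
covariances invert explicitly, and the divergence at noise level `s` splits as
`(d - r) s (y⁻¹ - s⁻¹)² + (y⁻² - (1 + y)⁻²) tr (U K Uᵀ (1 - E Eᵀ)) + F`,
where `F` is the Fisher divergence between the `r`-dimensional Gaussians of covariances `K + s I`
and `(1 + y) I`. The first term does not depend on `(U, V)`; the other two are nonnegative. `F`
vanishes iff `K = (1 + σ²) I`, and then the trace vanishes iff the columns of `U` lie in the range
of `E`, i.e. `U = E Q`. As these conditions do not involve `s`, one pair minimizes the integrand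
at every time, and equality of the integrals forces equality of the integrands at some time.
-/

section PosSemidefTrace

open scoped ComplexOrder

variable {𝕜 n : Type*} [RCLike 𝕜] [Fintype n] {A B : Matrix n n 𝕜}

open scoped MatrixOrder in
theorem exists_eq_conjTranspose_mul_self (hA : A.PosSemidef) : ∃ C : Matrix n n 𝕜, A = Cᴴ * C := by
  classical exact CStarAlgebra.nonneg_iff_eq_star_mul_self.mp hA.nonneg

theorem trace_mul_nonneg_of_posSemidef (hA : A.PosSemidef) (hB : B.PosSemidef) :
    0 ≤ (A * B).trace := by
  obtain ⟨C, rfl⟩ := exists_eq_conjTranspose_mul_self hA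
  rw [Matrix.mul_assoc, trace_mul_comm]
  exact (hB.mul_mul_conjTranspose_same C).trace_nonneg

theorem trace_mul_eq_zero_iff_of_posSemidef (hA : A.PosSemidef) (hB : B.PosSemidef) :
    (A * B).trace = 0 ↔ A * B = 0 := by
  refine ⟨fun h => ?_, fun h => by rw [h, trace_zero]⟩
  obtain ⟨C, rfl⟩ := exists_eq_conjTranspose_mul_self hA
  obtain ⟨D, rfl⟩ := exists_eq_conjTranspose_mul_self hB
  have hCD : C * Dᴴ = 0 := by
    rw [← trace_mul_conjTranspose_self_eq_zero_iff, ← h, Matrix.mul_assoc Cᴴ, trace_mul_comm Cᴴ,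
      conjTranspose_mul, conjTranspose_conjTranspose]
    simp only [Matrix.mul_assoc]
  rw [Matrix.mul_assoc, ← Matrix.mul_assoc C, hCD, Matrix.zero_mul, Matrix.mul_zero]

end PosSemidefTrace

section PosSemidefReal

variable {m n : Type*}

theorem posSemidef_sq_of_isHermitian [Fintype n] [DecidableEq n] {A : Matrix n n ℝ}
    (hA : A.IsHermitian) : (A ^ 2).PosSemidef := by
  simpa only [pow_two, hA.eq] using posSemidef_conjTranspose_mul_self A

theorem posDef_add_smul_one [DecidableEq n] {A : Matrix n n ℝ} (hA : A.PosSemidef) {s : ℝ}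
    (hs : 0 < s) : (A + s • (1 : Matrix n n ℝ)).PosDef :=
  PosDef.posSemidef_add hA (PosDef.one.smul hs)

theorem posSemidef_transpose_mul_self [Fintype m] [Finite n] (A : Matrix m n ℝ) :
    (Aᵀ * A).PosSemidef := by
  simpa only [conjTranspose_eq_transpose_of_trivial] using posSemidef_conjTranspose_mul_self A

theorem posSemidef_conj_transpose [Finite m] [Fintype n] {K : Matrix n n ℝ}
    (hK : K.PosSemidef) (U : Matrix m n ℝ) : (U * K * Uᵀ).PosSemidef := by
  simpa only [conjTranspose_eq_transpose_of_trivial] using hK.mul_mul_conjTranspose_same U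

theorem trace_inv_add_smul_one_le [Fintype n] [DecidableEq n] {A : Matrix n n ℝ}
    (hA : A.PosSemidef) {s : ℝ} (hs : 0 < s) :
    (A + s • (1 : Matrix n n ℝ))⁻¹.trace ≤ Fintype.card n / s := by
  have hS := posDef_add_smul_one hA hs
  have hAS := trace_mul_nonneg_of_posSemidef hA hS.posSemidef.inv
  have hcard : (A * (A + s • (1 : Matrix n n ℝ))⁻¹).trace +
      s * (A + s • (1 : Matrix n n ℝ))⁻¹.trace = Fintype.card n := by
    have h := congrArg trace (mul_nonsing_inv _ hS.det_pos.ne'.isUnit)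
    rwa [Matrix.add_mul, Matrix.smul_mul, Matrix.one_mul, trace_add, trace_smul, smul_eq_mul,
      trace_one] at h
  rw [le_div_iff₀' hs]
  linarith

theorem trace_mul_inv_add_smul_one_sq_le [Fintype n] [DecidableEq n] {A B : Matrix n n ℝ}
    (hA : A.PosSemidef) (hB : B.PosSemidef) {y : ℝ} (hy : 0 < y) :
    (B * (A + y • (1 : Matrix n n ℝ))⁻¹ ^ 2).trace ≤ B.trace / y ^ 2 := by
  set T := A + y • (1 : Matrix n n ℝ) with hT
  have hTpos : T.PosDef := posDef_add_smul_one hA hy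
  have hTunit : IsUnit T.det := hTpos.det_pos.ne'.isUnit
  have hTsq : T ^ 2 = y ^ 2 • (1 : Matrix n n ℝ) + ((2 * y) • A + A ^ 2) := by
    rw [hT, pow_two, pow_two A]
    simp only [Matrix.add_mul, Matrix.mul_add, Matrix.smul_mul, Matrix.mul_smul, Matrix.one_mul,
      Matrix.mul_one]
    module
  have hconj : (T⁻¹ * B * T⁻¹).PosSemidef := by
    simpa only [hTpos.inv.isHermitian.eq] using hB.conjTranspose_mul_mul_same T⁻¹
  have hrest := trace_mul_nonneg_of_posSemidef hconj
    ((hA.smul (by positivity : 0 ≤ 2 * y)).add (hA.pow 2))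
  have hsplit : B.trace = y ^ 2 * (B * T⁻¹ ^ 2).trace +
      (T⁻¹ * B * T⁻¹ * ((2 * y) • A + A ^ 2)).trace := by
    calc B.trace = (T⁻¹ * B * T⁻¹ * T ^ 2).trace := by
          rw [pow_two, ← Matrix.mul_assoc, nonsing_inv_mul_cancel_right _ _ hTunit, trace_mul_comm,
            mul_nonsing_inv_cancel_left _ _ hTunit]
      _ = _ := by
          rw [hTsq, Matrix.mul_add, trace_add, Matrix.mul_smul, Matrix.mul_one, trace_smul,
            smul_eq_mul, Matrix.mul_assoc T⁻¹ B T⁻¹, trace_mul_comm T⁻¹, pow_two T⁻¹,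
            Matrix.mul_assoc B]
  rw [le_div_iff₀' (by positivity)]
  linarith

end PosSemidefReal

section OrthonormalColumns

theorem inv_smul_one {𝕜 n : Type*} [Field 𝕜] [Fintype n] [DecidableEq n] (a : 𝕜) :
    (a • (1 : Matrix n n 𝕜))⁻¹ = a⁻¹ • (1 : Matrix n n 𝕜) := by
  obtain rfl | ha := eq_or_ne a 0
  · simp only [zero_smul, _root_.inv_zero, Matrix.inv_zero]
  · exact inv_eq_right_inv (by
      rw [smul_mul_smul_comm, mul_inv_cancel₀ ha, one_smul, Matrix.one_mul])

variable {m n : Type*} [Fintype m] [Fintype n] [DecidableEq n]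

theorem isIdempotentElem_mul_transpose {R : Type*} [CommRing R] {E : Matrix m n R}
    (hE : Eᵀ * E = 1) : IsIdempotentElem (E * Eᵀ) := by
  rw [IsIdempotentElem, Matrix.mul_assoc, ← Matrix.mul_assoc Eᵀ, hE, Matrix.one_mul]

theorem trace_conj_transpose {R : Type*} [CommRing R] {U : Matrix m n R} (hU : Uᵀ * U = 1)
    (K : Matrix n n R) : (U * K * Uᵀ).trace = K.trace := by
  rw [trace_mul_comm, ← Matrix.mul_assoc, hU, Matrix.one_mul]

theorem exists_orthogonal_eq_mul_iff {R : Type*} [CommRing R] {E U : Matrix m n R}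
    (hE : Eᵀ * E = 1) (hU : Uᵀ * U = 1) :
    (∃ Q : Matrix n n R, Qᵀ * Q = 1 ∧ U = E * Q) ↔ U = E * (Eᵀ * U) := by
  constructor
  · rintro ⟨Q, -, rfl⟩
    rw [← Matrix.mul_assoc Eᵀ, hE, Matrix.one_mul]
  · refine fun h => ⟨Eᵀ * U, ?_, h⟩
    rw [transpose_mul, transpose_transpose, Matrix.mul_assoc, ← h, hU]

variable [DecidableEq m]

theorem posSemidef_one_sub_mul_transpose {E : Matrix m n ℝ} (hE : Eᵀ * E = 1) :
    (1 - E * Eᵀ).PosSemidef := by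
  have hsymm : (1 - E * Eᵀ)ᵀ = 1 - E * Eᵀ := by simp
  rw [← (isIdempotentElem_mul_transpose hE).one_sub.eq]
  nth_rw 1 [← hsymm]
  exact posSemidef_transpose_mul_self _

theorem trace_conj_mul_one_sub_eq_zero_iff {E U : Matrix m n ℝ} (hE : Eᵀ * E = 1)
    (hU : Uᵀ * U = 1) {K : Matrix n n ℝ} (hK : K.PosDef) :
    (U * K * Uᵀ * (1 - E * Eᵀ)).trace = 0 ↔ ∃ Q : Matrix n n ℝ, Qᵀ * Q = 1 ∧ U = E * Q := by
  rw [trace_mul_eq_zero_iff_of_posSemidef (posSemidef_conj_transpose hK.posSemidef U)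
    (posSemidef_one_sub_mul_transpose hE), exists_orthogonal_eq_mul_iff hE hU]
  have hresidual : (Uᵀ * (1 - E * Eᵀ))ᵀ = U - E * (Eᵀ * U) := by
    simp [Matrix.sub_mul, Matrix.mul_assoc]
  constructor
  · intro h
    have hcancel : K⁻¹ * Uᵀ * (U * K * Uᵀ * (1 - E * Eᵀ)) = Uᵀ * (1 - E * Eᵀ) := by
      calc K⁻¹ * Uᵀ * (U * K * Uᵀ * (1 - E * Eᵀ))
          = K⁻¹ * (Uᵀ * U * K) * (Uᵀ * (1 - E * Eᵀ)) := by simp only [Matrix.mul_assoc]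
        _ = Uᵀ * (1 - E * Eᵀ) := by
          rw [hU, Matrix.one_mul, nonsing_inv_mul K hK.det_pos.ne'.isUnit, Matrix.one_mul]
    rw [h, Matrix.mul_zero] at hcancel
    rw [← sub_eq_zero, ← hresidual, ← hcancel, transpose_zero]
  · intro h
    rw [Matrix.mul_assoc, ← transpose_transpose (Uᵀ * (1 - E * Eᵀ)), hresidual,
      sub_eq_zero.mpr h, transpose_zero, Matrix.mul_zero]

theorem inv_conj_add_smul_one {𝕜 : Type*} [Field 𝕜] {U : Matrix m n 𝕜} (hU : Uᵀ * U = 1)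
    (K : Matrix n n 𝕜) {s : 𝕜} (hs : s ≠ 0) (hK : IsUnit (K + s • (1 : Matrix n n 𝕜)).det) :
    (U * K * Uᵀ + s • (1 : Matrix m m 𝕜))⁻¹ =
      U * (K + s • (1 : Matrix n n 𝕜))⁻¹ * Uᵀ + s⁻¹ • (1 - U * Uᵀ) := by
  apply inv_eq_right_inv
  set X := K + s • (1 : Matrix n n 𝕜) with hX
  have hsplit : U * K * Uᵀ + s • (1 : Matrix m m 𝕜) = U * X * Uᵀ + s • (1 - U * Uᵀ) := by
    simp only [hX, Matrix.mul_add, Matrix.add_mul, Matrix.mul_smul, Matrix.smul_mul,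
      Matrix.mul_one, smul_sub]
    abel
  have hUU (Y : Matrix n m 𝕜) : Uᵀ * (U * Y) = Y := by
    rw [← Matrix.mul_assoc, hU, Matrix.one_mul]
  rw [hsplit]
  simp only [Matrix.mul_assoc, Matrix.add_mul, Matrix.mul_add, Matrix.mul_sub, Matrix.sub_mul,
    Matrix.smul_mul, Matrix.mul_smul, Matrix.one_mul, Matrix.mul_one, hUU,
    mul_nonsing_inv_cancel_left X _ hK, sub_self, smul_zero, add_zero]
  rw [add_sub_cancel_left, inv_smul_smul₀ hs, add_sub_cancel]

theorem inv_mul_transpose_add_smul_one {E : Matrix m n ℝ} (hE : Eᵀ * E = 1) {y : ℝ} (hy : 0 < y) :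
    (E * Eᵀ + y • (1 : Matrix m m ℝ))⁻¹ = (1 + y)⁻¹ • (E * Eᵀ) + y⁻¹ • (1 - E * Eᵀ) := by
  have hone : (1 : Matrix n n ℝ) + y • (1 : Matrix n n ℝ) = (1 + y) • (1 : Matrix n n ℝ) := by
    rw [add_smul, one_smul]
  have h := inv_conj_add_smul_one hE 1 hy.ne'
    (posDef_add_smul_one PosSemidef.one hy).det_pos.ne'.isUnit
  rwa [hone, inv_smul_one, Matrix.mul_one, Matrix.mul_smul, Matrix.mul_one, Matrix.smul_mul] at h

end OrthonormalColumns

section FisherDivergence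

theorem inv_sq_sub_inv_one_add_sq_pos {𝕜 : Type*} [Field 𝕜] [LinearOrder 𝕜] [IsStrictOrderedRing 𝕜]
    {y : 𝕜} (hy : 0 < y) : 0 < y⁻¹ ^ 2 - (1 + y)⁻¹ ^ 2 := by
  have hlt : (1 + y)⁻¹ < y⁻¹ := inv_strictAnti₀ hy (lt_one_add y)
  exact sub_pos.mpr (pow_lt_pow_left₀ hlt (by positivity) two_ne_zero)

variable {m n : Type*} [Fintype m] [DecidableEq m] [Fintype n] [DecidableEq n]

/-- The Fisher divergence of the centred Gaussian `N(0, S)` relative to `N(0, T)`, in closed form: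
the scores are `-S⁻¹ x` and `-T⁻¹ x`. -/
noncomputable def fisherDivergence (S T : Matrix n n ℝ) : ℝ :=
  (S * (T⁻¹ - S⁻¹) ^ 2).trace

theorem fisherDivergence_nonneg {S T : Matrix n n ℝ} (hS : S.PosSemidef) (hT : T.IsHermitian) :
    0 ≤ fisherDivergence S T :=
  trace_mul_nonneg_of_posSemidef hS
    (posSemidef_sq_of_isHermitian (hT.inv.sub hS.isHermitian.inv))

theorem fisherDivergence_eq_zero_iff {S T : Matrix n n ℝ} (hS : S.PosDef) (hT : T.PosDef) :
    fisherDivergence S T = 0 ↔ S = T := by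
  have hgap : (T⁻¹ - S⁻¹).IsHermitian := hT.inv.isHermitian.sub hS.inv.isHermitian
  rw [fisherDivergence, trace_mul_eq_zero_iff_of_posSemidef hS.posSemidef
    (posSemidef_sq_of_isHermitian hgap), hS.isUnit.mul_right_eq_zero, pow_two]
  nth_rw 1 [← hgap.eq]
  rw [conjTranspose_mul_self_eq_zero, sub_eq_zero]
  exact ⟨fun h => inv_inj h.symm hS.det_pos.ne'.isUnit, fun h => by rw [h]⟩

theorem fisherDivergence_eq {S : Matrix n n ℝ} (hS : IsUnit S.det) (T : Matrix n n ℝ) :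
    fisherDivergence S T = (S * T⁻¹ ^ 2).trace - 2 * T⁻¹.trace + S⁻¹.trace := by
  have hcomm : (S * (T⁻¹ * S⁻¹)).trace = T⁻¹.trace := by
    rw [trace_mul_comm, nonsing_inv_mul_cancel_right _ _ hS]
  rw [fisherDivergence, pow_two, pow_two]
  simp only [Matrix.mul_sub, Matrix.sub_mul, mul_nonsing_inv_cancel_left _ _ hS, trace_sub, hcomm]
  ring

theorem fisherDivergence_add_smul_one_le {A B : Matrix n n ℝ} (hA : A.PosSemidef)
    (hB : B.PosSemidef) {s y : ℝ} (hs : 0 < s) (hy : 0 < y) :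
    fisherDivergence (A + s • (1 : Matrix n n ℝ)) (B + y • (1 : Matrix n n ℝ)) ≤
      (A.trace + s * Fintype.card n) / y ^ 2 + Fintype.card n / s := by
  have hS := posDef_add_smul_one hA hs
  have htrace : (A + s • (1 : Matrix n n ℝ)).trace = A.trace + s * Fintype.card n := by
    rw [trace_add, trace_smul, trace_one, smul_eq_mul]
  have hfirst := trace_mul_inv_add_smul_one_sq_le hB hS.posSemidef hy
  have hcross := (posDef_add_smul_one hB hy).inv.posSemidef.trace_nonneg
  have hlast := trace_inv_add_smul_one_le hA hs
  rw [fisherDivergence_eq hS.det_pos.ne'.isUnit, ← htrace]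
  linarith

theorem fisherDivergence_conj_add_smul_one {E U : Matrix m n ℝ} (hE : Eᵀ * E = 1)
    (hU : Uᵀ * U = 1) {K : Matrix n n ℝ} (hK : K.PosSemidef) {s y : ℝ} (hs : 0 < s) (hy : 0 < y) :
    fisherDivergence (U * K * Uᵀ + s • (1 : Matrix m m ℝ)) (E * Eᵀ + y • (1 : Matrix m m ℝ)) =
      (Fintype.card m - Fintype.card n) * (s * (y⁻¹ - s⁻¹) ^ 2) +
      (y⁻¹ ^ 2 - (1 + y)⁻¹ ^ 2) * (U * K * Uᵀ * (1 - E * Eᵀ)).trace +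
      fisherDivergence (K + s • (1 : Matrix n n ℝ)) ((1 + y) • (1 : Matrix n n ℝ)) := by
  have hXunit := (posDef_add_smul_one hK hs).det_pos.ne'.isUnit
  have hSunit := (posDef_add_smul_one (posSemidef_conj_transpose hK U) hs).det_pos.ne'.isUnit
  have hP := (isIdempotentElem_mul_transpose hE).eq
  have hTsq : (E * Eᵀ + y • (1 : Matrix m m ℝ))⁻¹ ^ 2 =
      (1 + y)⁻¹ ^ 2 • (1 : Matrix m m ℝ) + (y⁻¹ ^ 2 - (1 + y)⁻¹ ^ 2) • (1 - E * Eᵀ) := by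
    rw [inv_mul_transpose_add_smul_one hE hy, pow_two]
    simp only [Matrix.add_mul, Matrix.mul_add, Matrix.smul_mul, Matrix.mul_smul, Matrix.mul_sub,
      Matrix.sub_mul, Matrix.one_mul, Matrix.mul_one, hP]
    module
  have htrace_proj {W : Matrix m n ℝ} (hW : Wᵀ * W = 1) : (W * Wᵀ).trace = Fintype.card n := by
    rw [trace_mul_comm, hW, trace_one]
  rw [fisherDivergence_eq hSunit, fisherDivergence_eq hXunit, hTsq,
    inv_mul_transpose_add_smul_one hE hy, inv_conj_add_smul_one hU K hs.ne' hXunit, inv_smul_one]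
  simp only [smul_pow, one_pow, Matrix.add_mul, Matrix.mul_add, Matrix.smul_mul, Matrix.mul_smul,
    Matrix.one_mul, Matrix.mul_one, trace_add, trace_smul, trace_sub, trace_one,
    trace_conj_transpose hU, htrace_proj hE, htrace_proj hU, smul_eq_mul]
  field_simp
  ring

theorem le_fisherDivergence_conj_add_smul_one {E U : Matrix m n ℝ} (hE : Eᵀ * E = 1)
    (hU : Uᵀ * U = 1) {K : Matrix n n ℝ} (hK : K.PosSemidef) {s y : ℝ} (hs : 0 < s) (hy : 0 < y) :
    (Fintype.card m - Fintype.card n) * (s * (y⁻¹ - s⁻¹) ^ 2) ≤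
      fisherDivergence (U * K * Uᵀ + s • (1 : Matrix m m ℝ))
        (E * Eᵀ + y • (1 : Matrix m m ℝ)) := by
  have halign := trace_mul_nonneg_of_posSemidef (posSemidef_conj_transpose hK U)
    (posSemidef_one_sub_mul_transpose hE)
  have hsub : 0 ≤ fisherDivergence (K + s • (1 : Matrix n n ℝ)) ((1 + y) • (1 : Matrix n n ℝ)) :=
    fisherDivergence_nonneg (posDef_add_smul_one hK hs).posSemidef
      (PosDef.one.smul (by positivity : 0 < 1 + y)).isHermitian
  rw [fisherDivergence_conj_add_smul_one hE hU hK hs hy, add_assoc]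
  exact le_add_of_nonneg_right
    (add_nonneg (mul_nonneg (inv_sq_sub_inv_one_add_sq_pos hy).le halign) hsub)

theorem fisherDivergence_conj_add_smul_one_eq_iff {E U : Matrix m n ℝ} (hE : Eᵀ * E = 1)
    (hU : Uᵀ * U = 1) {K : Matrix n n ℝ} (hK : K.PosSemidef) {c s : ℝ} (hc : 0 ≤ c) (hs : 0 < s) :
    fisherDivergence (U * K * Uᵀ + s • (1 : Matrix m m ℝ))
        (E * Eᵀ + (c + s) • (1 : Matrix m m ℝ)) =
      (Fintype.card m - Fintype.card n) * (s * ((c + s)⁻¹ - s⁻¹) ^ 2) ↔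
    (∃ Q : Matrix n n ℝ, Qᵀ * Q = 1 ∧ U = E * Q) ∧ K = (1 + c) • (1 : Matrix n n ℝ) := by
  have hy : 0 < c + s := add_pos_of_nonneg_of_pos hc hs
  have hgap := inv_sq_sub_inv_one_add_sq_pos hy
  have halign := trace_mul_nonneg_of_posSemidef (posSemidef_conj_transpose hK U)
    (posSemidef_one_sub_mul_transpose hE)
  have hX := posDef_add_smul_one hK hs
  have hdata : ((1 + (c + s)) • (1 : Matrix n n ℝ)).PosDef := PosDef.one.smul (by positivity)
  have hvariance : K + s • (1 : Matrix n n ℝ) = (1 + (c + s)) • (1 : Matrix n n ℝ) ↔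
      K = (1 + c) • (1 : Matrix n n ℝ) := by
    rw [← add_assoc, add_smul (1 + c), add_left_inj]
  have hposDef (h : K = (1 + c) • (1 : Matrix n n ℝ)) : K.PosDef :=
    h ▸ PosDef.one.smul (by positivity)
  rw [fisherDivergence_conj_add_smul_one hE hU hK hs hy, add_assoc, add_eq_left,
    add_eq_zero_iff_of_nonneg (mul_nonneg hgap.le halign)
      (fisherDivergence_nonneg hX.posSemidef hdata.isHermitian),
    mul_eq_zero_iff_left hgap.ne', fisherDivergence_eq_zero_iff hX hdata, hvariance]
  exact and_congr_left fun h => trace_conj_mul_one_sub_eq_zero_iff hE hU (hposDef h)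

variable {X : Type*} [TopologicalSpace X] [MeasurableSpace X] [OpensMeasurableSpace X]

theorem measurable_inv_apply {A : X → Matrix n n ℝ} (hA : Continuous A) (i j : n) :
    Measurable fun x => (A x)⁻¹ i j := by
  simp only [inv_def, Ring.inverse_eq_inv', Matrix.smul_apply, smul_eq_mul]
  exact hA.matrix_det.measurable.inv.mul (hA.matrix_adjugate.matrix_elem i j).measurable

theorem measurable_fisherDivergence {S T : X → Matrix n n ℝ} (hS : Continuous S)
    (hT : Continuous T) : Measurable fun x => fisherDivergence (S x) (T x) := by
  have hS_apply (i j : n) : Measurable fun x => S x i j := (hS.matrix_elem i j).measurable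
  have hS_inv := measurable_inv_apply hS
  have hT_inv := measurable_inv_apply hT
  simp only [fisherDivergence, trace, diag_apply, pow_two, mul_apply, Matrix.sub_apply]
  exact Finset.measurable_sum _ fun i _ => Finset.measurable_sum _ fun j _ =>
    (hS_apply i j).mul <| Finset.measurable_sum _ fun k _ =>
      ((hT_inv j k).sub (hS_inv j k)).mul ((hT_inv k i).sub (hS_inv k i))

theorem integrable_fisherDivergence_add_smul_one {Ω : Type*} [MeasurableSpace Ω] {μ : Measure Ω}
    {A B : Matrix n n ℝ} (hA : A.PosSemidef) (hB : B.PosSemidef) {c : ℝ} (hc : 0 < c) {s : Ω → ℝ}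
    (hs : ∀ᵐ t ∂μ, 0 < s t) (hs_inv : Integrable (fun t => (s t)⁻¹) μ) :
    Integrable (fun t => fisherDivergence (A + s t • (1 : Matrix n n ℝ))
      (B + (c + s t) • (1 : Matrix n n ℝ))) μ := by
  have hmeas : Measurable fun x : ℝ => fisherDivergence (A + x • (1 : Matrix n n ℝ))
      (B + (c + x) • (1 : Matrix n n ℝ)) :=
    measurable_fisherDivergence (by fun_prop) (by fun_prop)
  have hs_aemeas : AEMeasurable s μ := by simpa only [inv_inv] using hs_inv.aemeasurable.fun_inv
  refine (hs_inv.const_mul (A.trace / c + 2 * Fintype.card n)).mono'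
    (hmeas.comp_aemeasurable hs_aemeas).aestronglyMeasurable ?_
  filter_upwards [hs] with t ht
  have hy : 0 < c + s t := by positivity
  have hnonneg := fisherDivergence_nonneg (posDef_add_smul_one hA ht).posSemidef
    (posDef_add_smul_one hB hy).isHermitian
  rw [Real.norm_of_nonneg hnonneg]
  have htr := hA.trace_nonneg
  calc _ ≤ (A.trace + s t * Fintype.card n) / (c + s t) ^ 2 + Fintype.card n / s t :=
        fisherDivergence_add_smul_one_le hA hB ht hy
    _ = A.trace / (c + s t) ^ 2 + s t * Fintype.card n / (c + s t) ^ 2 + Fintype.card n / s t := by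
        rw [add_div]
    _ ≤ A.trace / (c * s t) + s t * Fintype.card n / s t ^ 2 + Fintype.card n / s t := by
        gcongr
        · nlinarith
        · linarith
    _ = (A.trace / c + 2 * Fintype.card n) * (s t)⁻¹ := by field_simp; ring

end FisherDivergence

section DistillationLoss

variable {Ω m n : Type*} [MeasurableSpace Ω] [Fintype m] [DecidableEq m] [Fintype n]
  {μ : Measure Ω} {s : Ω → ℝ} {c : ℝ}

/-- The integrand of the distillation loss at noise variance `x`: the Fisher divergence of the
smoothed generator `N(0, U Vᵀ V Uᵀ + x I)` relative to the smoothed noisy data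
`N(0, E Eᵀ + (c + x) I)`, where `c` is the variance `σ²` of the data noise. -/
noncomputable def smoothedDivergence (c : ℝ) (E U V : Matrix m n ℝ) (x : ℝ) : ℝ :=
  fisherDivergence (U * Vᵀ * V * Uᵀ + x • (1 : Matrix m m ℝ))
    (E * Eᵀ + (c + x) • (1 : Matrix m m ℝ))

/-- The distillation loss `L(U, V)`, for times `t` distributed according to `μ` and noise variances
`s t`. In the paper `s t = σ_t²` and `μ` is Lebesgue measure on `(0, 1)`. -/
noncomputable def distillationLoss (μ : Measure Ω) (s : Ω → ℝ) (c : ℝ) (E U V : Matrix m n ℝ) : ℝ :=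
  ∫ t, smoothedDivergence c E U V (s t) ∂μ

theorem integrable_smoothedDivergence (hc : 0 < c) (hs : ∀ᵐ t ∂μ, 0 < s t)
    (hs_inv : Integrable (fun t => (s t)⁻¹) μ) (E U V : Matrix m n ℝ) :
    Integrable (fun t => smoothedDivergence c E U V (s t)) μ := by
  have hdata : (E * Eᵀ).PosSemidef := by
    simpa only [transpose_transpose] using posSemidef_transpose_mul_self Eᵀ
  have hgen : (U * Vᵀ * V * Uᵀ).PosSemidef := by
    simpa only [Matrix.mul_assoc] using
      posSemidef_conj_transpose (posSemidef_transpose_mul_self V) U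
  exact integrable_fisherDivergence_add_smul_one hgen hdata hc hs hs_inv

variable [DecidableEq n] {E U V V₀ : Matrix m n ℝ}

theorem smoothedDivergence_of_gram_eq (hE : Eᵀ * E = 1)
    (hV₀ : V₀ᵀ * V₀ = (1 + c) • (1 : Matrix n n ℝ)) (hc : 0 ≤ c) {x : ℝ} (hx : 0 < x) :
    smoothedDivergence c E E V₀ x =
      (Fintype.card m - Fintype.card n) * (x * ((c + x)⁻¹ - x⁻¹) ^ 2) := by
  rw [smoothedDivergence, Matrix.mul_assoc E]
  exact (fisherDivergence_conj_add_smul_one_eq_iff hE hE (posSemidef_transpose_mul_self V₀)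
    hc hx).mpr ⟨⟨1, by simp, by simp⟩, hV₀⟩

theorem smoothedDivergence_ge_of_gram_eq (hE : Eᵀ * E = 1)
    (hV₀ : V₀ᵀ * V₀ = (1 + c) • (1 : Matrix n n ℝ)) (hc : 0 ≤ c) (hU : Uᵀ * U = 1)
    (V : Matrix m n ℝ) {x : ℝ} (hx : 0 < x) :
    smoothedDivergence c E E V₀ x ≤ smoothedDivergence c E U V x := by
  rw [smoothedDivergence_of_gram_eq hE hV₀ hc hx, smoothedDivergence, Matrix.mul_assoc U]
  exact le_fisherDivergence_conj_add_smul_one hE hU (posSemidef_transpose_mul_self V) hx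
    (add_pos_of_nonneg_of_pos hc hx)

theorem smoothedDivergence_eq_iff_of_gram_eq (hE : Eᵀ * E = 1)
    (hV₀ : V₀ᵀ * V₀ = (1 + c) • (1 : Matrix n n ℝ)) (hc : 0 ≤ c) (hU : Uᵀ * U = 1)
    {x : ℝ} (hx : 0 < x) :
    smoothedDivergence c E E V₀ x = smoothedDivergence c E U V x ↔
      (∃ Q : Matrix n n ℝ, Qᵀ * Q = 1 ∧ U = E * Q) ∧ Vᵀ * V = (1 + c) • (1 : Matrix n n ℝ) := by
  rw [smoothedDivergence_of_gram_eq hE hV₀ hc hx, smoothedDivergence, Matrix.mul_assoc U, eq_comm]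
  exact fisherDivergence_conj_add_smul_one_eq_iff hE hU (posSemidef_transpose_mul_self V) hc hx

theorem distillationLoss_ge_of_gram_eq (hE : Eᵀ * E = 1)
    (hV₀ : V₀ᵀ * V₀ = (1 + c) • (1 : Matrix n n ℝ)) (hc : 0 < c) (hs : ∀ᵐ t ∂μ, 0 < s t)
    (hs_inv : Integrable (fun t => (s t)⁻¹) μ) (hU : Uᵀ * U = 1) (V : Matrix m n ℝ) :
    distillationLoss μ s c E E V₀ ≤ distillationLoss μ s c E U V :=
  integral_mono_ae (integrable_smoothedDivergence hc hs hs_inv E E V₀)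
    (integrable_smoothedDivergence hc hs hs_inv E U V)
    (hs.mono fun _ => smoothedDivergence_ge_of_gram_eq hE hV₀ hc.le hU V)

theorem distillationLoss_eq_iff_of_gram_eq [NeZero μ] (hE : Eᵀ * E = 1)
    (hV₀ : V₀ᵀ * V₀ = (1 + c) • (1 : Matrix n n ℝ)) (hc : 0 < c) (hs : ∀ᵐ t ∂μ, 0 < s t)
    (hs_inv : Integrable (fun t => (s t)⁻¹) μ) (hU : Uᵀ * U = 1) :
    distillationLoss μ s c E E V₀ = distillationLoss μ s c E U V ↔
      (∃ Q : Matrix n n ℝ, Qᵀ * Q = 1 ∧ U = E * Q) ∧ Vᵀ * V = (1 + c) • (1 : Matrix n n ℝ) := by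
  rw [distillationLoss, distillationLoss, integral_eq_iff_of_ae_le
    (integrable_smoothedDivergence hc hs hs_inv E E V₀)
    (integrable_smoothedDivergence hc hs hs_inv E U V)
    (hs.mono fun _ => smoothedDivergence_ge_of_gram_eq hE hV₀ hc.le hU V), Filter.EventuallyEq,
    Filter.eventually_congr (hs.mono fun _ => smoothedDivergence_eq_iff_of_gram_eq hE hV₀ hc.le hU),
    Filter.eventually_const]

theorem distillation_global_minimizers_general [NeZero μ] (hE : Eᵀ * E = 1) (hc : 0 < c)
    (hs : ∀ᵐ t ∂μ, 0 < s t) (hs_inv : Integrable (fun t => (s t)⁻¹) μ) {Ustar Vstar : Matrix m n ℝ}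
    (hUstar : Ustarᵀ * Ustar = 1) :
    (∀ U V : Matrix m n ℝ, Uᵀ * U = 1 → (Vᵀ * V).PosDef →
        distillationLoss μ s c E Ustar Vstar ≤ distillationLoss μ s c E U V) ↔
      (∃ Q : Matrix n n ℝ, Qᵀ * Q = 1 ∧ Ustar = E * Q) ∧
        Vstarᵀ * Vstar = (1 + c) • (1 : Matrix n n ℝ) := by
  have hV₀ : (√(1 + c) • E)ᵀ * (√(1 + c) • E) = (1 + c) • (1 : Matrix n n ℝ) := by
    rw [transpose_smul, Matrix.smul_mul, Matrix.mul_smul, hE, smul_smul,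
      Real.mul_self_sqrt (by positivity)]
  have hV₀_posDef : ((√(1 + c) • E)ᵀ * (√(1 + c) • E)).PosDef :=
    hV₀ ▸ PosDef.one.smul (by positivity)
  have hmin {U : Matrix m n ℝ} (hU : Uᵀ * U = 1) (V : Matrix m n ℝ) :=
    distillationLoss_ge_of_gram_eq hE hV₀ hc hs hs_inv hU V
  rw [← distillationLoss_eq_iff_of_gram_eq hE hV₀ hc hs hs_inv hUstar]
  exact ⟨fun h => (hmin hUstar Vstar).antisymm (h E _ hE hV₀_posDef),
    fun h U V hU _ => h ▸ hmin hU V⟩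

end DistillationLoss

theorem ae_sq_pos_and_integrable_inv_sq {Ω : Type*} [MeasurableSpace Ω] {μ : Measure Ω}
    [IsFiniteMeasure μ] {f : Ω → ℝ} (hf : AEMeasurable f μ) {a : ℝ} (ha : 0 < a)
    (hle : ∀ᵐ t ∂μ, a ≤ f t) :
    (∀ᵐ t ∂μ, 0 < f t ^ 2) ∧ Integrable (fun t => (f t ^ 2)⁻¹) μ := by
  refine ⟨hle.mono fun t ht => pow_pos (ha.trans_le ht) 2,
    Integrable.of_bound (hf.pow_const 2).inv.aestronglyMeasurable (a ^ 2)⁻¹ ?_⟩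
  filter_upwards [hle] with t ht
  rw [Real.norm_of_nonneg (by positivity)]
  gcongr

/-- Let `E` be a `d × r` (`r < d`) real matrix with orthonormal columns,
`σ > 0`, and `σ_t` a measurable noise schedule on `(0,1)` bounded in `[σmin, σmax]` with
`0 < σmin`. Over the parameter class `Θ = {(U,V) : Uᵀ U = I_r, Vᵀ V ≻ 0}`, the
distillation loss
`L(U,V) = ∫₀¹ tr((U Vᵀ V Uᵀ + σ_t² I)·((E Eᵀ + (σ² + σ_t²) I)⁻¹ − (U Vᵀ V Uᵀ + σ_t² I)⁻¹)²) dt`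
is globally minimized at `(U*, V*) ∈ Θ` iff `U* = E Q` for some orthogonal `Q` and
`(V*)ᵀ V* = (1 + σ²) I_r`. -/
theorem distillation_global_minimizers {d r : ℕ} (hd : 0 < d) (hr : 0 < r) (hrd : r < d)
    (E : Matrix (Fin d) (Fin r) ℝ) (hE : Eᵀ * E = 1)
    (σ : ℝ) (hσ : 0 < σ)
    (σt : ℝ → ℝ) (hmeas : Measurable σt)
    (σmin σmax : ℝ) (hσmin : 0 < σmin)
    (hbound : ∀ t ∈ Set.Ioo (0 : ℝ) 1, σmin ≤ σt t ∧ σt t ≤ σmax)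
    (L : Matrix (Fin d) (Fin r) ℝ → Matrix (Fin d) (Fin r) ℝ → ℝ)
    (hL : ∀ U V : Matrix (Fin d) (Fin r) ℝ,
      L U V = ∫ t in Set.Ioo (0 : ℝ) 1,
        ((U * Vᵀ * V * Uᵀ + (σt t) ^ 2 • (1 : Matrix (Fin d) (Fin d) ℝ)) *
          ((E * Eᵀ + (σ ^ 2 + (σt t) ^ 2) • (1 : Matrix (Fin d) (Fin d) ℝ))⁻¹ -
            (U * Vᵀ * V * Uᵀ + (σt t) ^ 2 • (1 : Matrix (Fin d) (Fin d) ℝ))⁻¹) ^ 2).trace)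
    (Ustar Vstar : Matrix (Fin d) (Fin r) ℝ)
    (hUstar : Ustarᵀ * Ustar = 1) (hVstar : (Vstarᵀ * Vstar).PosDef) :
    ((∀ U V : Matrix (Fin d) (Fin r) ℝ, Uᵀ * U = 1 → (Vᵀ * V).PosDef →
        L Ustar Vstar ≤ L U V) ↔
      ((∃ Q : Matrix (Fin r) (Fin r) ℝ, Qᵀ * Q = 1 ∧ Ustar = E * Q) ∧
        Vstarᵀ * Vstar = (1 + σ ^ 2) • (1 : Matrix (Fin r) (Fin r) ℝ))) := by
  obtain rfl := funext₂ hL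
  have : NeZero (volume (Set.Ioo (0 : ℝ) 1)) := ⟨by simp⟩
  obtain ⟨hpos, hint⟩ := ae_sq_pos_and_integrable_inv_sq
    (μ := volume.restrict (Set.Ioo (0 : ℝ) 1)) hmeas.aemeasurable hσmin
    (ae_restrict_of_forall_mem measurableSet_Ioo fun t ht => (hbound t ht).1)
  exact distillation_global_minimizers_general hE (pow_pos hσ 2) hpos hint hUstar
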